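/- Let θ : S → R be a reflexive extension. Then a left R-module X is reflexive as an R-module if and only if the underlying left S-module X (via restriction of scalars along θ) is reflexive as an S-module. -/

import Mathlib

/- STATEMENT 3: For a reflexive extension θ : S → R, a left R-module X is reflexive
over R iff the underlying S-module X (restriction of scalars along θ) is reflexive. -/

universe u v w

/-- The evaluation map `X → Hom_{Sᵒᵖ}(Hom_S(X,S), S)`, `x ↦ (f ↦ f x)`. -/
def evalFun (S : Type u) [Ring S] (X : Type v) [AddCommGroup X] [Module S X] :
    X → ((X →ₗ[S] S) →ₗ[Sᵐᵒᵖ] S) := fun x =>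
  { toFun := fun f => f x
    map_add' := fun _ _ => rfl
    map_smul' := fun _ _ => rfl }

/-- A left `S`-module is reflexive if the evaluation map into its double dual is bijective. -/
def IsReflexiveMod (S : Type u) [Ring S] (X : Type v) [AddCommGroup X] [Module S X] : Prop :=
  Function.Bijective (evalFun S X)

/-- A left `S`-module is torsionless if the evaluation map into its double dual is injective. -/
def IsTorsionlessMod (S : Type u) [Ring S] (X : Type v) [AddCommGroup X] [Module S X] : Prop :=
  Function.Injective (evalFun S X)

/-- A ring extension `θ : S →+* R` (where the `S`-module structure on `R` is given by
restriction of scalars along `θ`, i.e. `s • r = θ s * r`) is a reflexive extension if the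
left `S`-module `R` is reflexive and there is an isomorphism `Hom_S(R,S) ≅ R` of
`R`-`S`-bimodules, where `Hom_S(R,S)` carries the left `R`-action `(a·f)(r) = f (r * a)`
and the right `S`-action `(f·s)(r) = f r * s`, and the right `S`-action on `R` is via `θ`. -/
def IsReflexiveExtension {S : Type u} {R : Type v} [Ring S] [Ring R] (θ : S →+* R)
    [Module S R] : Prop :=
  IsReflexiveMod S R ∧
  ∃ Φ : (R →ₗ[S] S) → R, Function.Bijective Φ ∧
    (∀ f g : R →ₗ[S] S, Φ (f + g) = Φ f + Φ g) ∧
    (∀ (a : R) (f g : R →ₗ[S] S), (∀ r, g r = f (r * a)) → Φ g = a * Φ f) ∧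
    (∀ (s : S) (f g : R →ₗ[S] S), (∀ r, g r = f r * s) → Φ g = Φ f * θ s)

/-!
The preimage `π : R → S` of `1` under `Hom_S(R, S) ≅ R` is an `S`-bimodule map for which
`a ↦ π (- * a)` identifies `R` with `Hom_S(R, S)`, and reflexivity of `R` over `S` says precisely
that `b ↦ π (b * -)` identifies `R` with `Hom_{Sᵒᵖ}(R, S)`. So `R` is coinduced from `S` along `π`,
both as a left and as a right `R`-module, and composing with `π` identifies the `R`-dual of every
left or right `R`-module with its `S`-dual. Applied to `X` and to `Hom_R(X, R)`, this matches the
double duals of `X` over `R` and over `S`, compatibly with the evaluation maps.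
-/

open MulOpposite

theorem isScalarTower_of_smul_eq {S R X : Type*} [Semiring S] [Semiring R] [AddCommMonoid X]
    [Module S R] [Module R X] [Module S X] (θ : S →+* R)
    (hR : ∀ (s : S) (r : R), s • r = θ s * r) (hX : ∀ (s : S) (x : X), s • x = θ s • x) :
    IsScalarTower S R X :=
  ⟨fun s r x ↦ by rw [hR, hX, mul_smul]⟩

section Coinduced

variable {S R U V : Type*} [Semiring S] [Semiring R] [Module S R]
  [AddCommMonoid U] [Module R U] [Module S U] [IsScalarTower S R U] [AddCommMonoid V] [Module S V]

/-- The `S`-linear map `π : U → V` exhibits the `R`-module `U` as coinduced (coextended) from the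
`S`-module `V`. Only the bijection `U ≃ Hom_S(R, V)`, `u ↦ (r ↦ π (r • u))`, is required; the
universal property for all `R`-modules is `IsCoinduced.bijective_comp`. -/
def IsCoinduced (R : Type*) [Semiring R] [Module S R] [Module R U] [IsScalarTower S R U]
    (π : U →ₗ[S] V) : Prop :=
  Function.Bijective fun u : U ↦ π ∘ₗ (LinearMap.toSpanSingleton R U u).restrictScalars S

theorem IsCoinduced.ext {π : U →ₗ[S] V} (hπ : IsCoinduced R π) {u u' : U}
    (h : ∀ r : R, π (r • u) = π (r • u')) : u = u' :=
  hπ.injective (LinearMap.ext h)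

theorem IsCoinduced.exists_apply_smul_eq {π : U →ₗ[S] V} (hπ : IsCoinduced R π) (f : R →ₗ[S] V) :
    ∃ u : U, ∀ r, π (r • u) = f r :=
  (hπ.surjective f).imp fun _ hu r ↦ LinearMap.congr_fun hu r

variable {X : Type*} [AddCommMonoid X] [Module R X] [Module S X] [IsScalarTower S R X]

theorem IsCoinduced.bijective_comp {π : U →ₗ[S] V} (hπ : IsCoinduced R π) :
    Function.Bijective fun φ : X →ₗ[R] U ↦ π ∘ₗ φ.restrictScalars S := by
  constructor
  · intro φ φ' h
    refine LinearMap.ext fun x ↦ hπ.ext fun r ↦ ?_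
    simpa using LinearMap.congr_fun h (r • x)
  · intro f
    choose φ hφ using fun x : X ↦
      hπ.exists_apply_smul_eq (f ∘ₗ (LinearMap.toSpanSingleton R X x).restrictScalars S)
    replace hφ : ∀ x (r : R), π (r • φ x) = f (r • x) := hφ
    refine ⟨{ toFun := φ, map_add' := fun x y ↦ ?_, map_smul' := fun a x ↦ ?_ }, ?_⟩
    · exact hπ.ext fun r ↦ by simp only [smul_add, map_add, hφ]
    · exact hπ.ext fun r ↦ by simp only [RingHom.id_apply, ← mul_smul, hφ]
    · ext x
      simpa using hφ x 1

end Coinduced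

section TwoSided

variable {S R : Type*} [Ring S] [Ring R] [Module S R] [IsScalarTower S R R]
  [Module Sᵐᵒᵖ R] [SMulCommClass R Sᵐᵒᵖ R] [IsScalarTower Sᵐᵒᵖ Rᵐᵒᵖ R]
  {π : R →ₗ[S] S} {ρ : R →ₗ[Sᵐᵒᵖ] S}
  (X : Type*) [AddCommGroup X] [Module R X] [Module S X] [IsScalarTower S R X]

/-- The isomorphism `Hom_R(X, R) ≃ Hom_S(X, S)` of right `S`-modules given by composition with
`π`. That `π` is also right `S`-linear is expressed by a map `ρ` with the same values. -/
noncomputable def IsCoinduced.dualEquiv (hπ : IsCoinduced R π) (hρπ : ∀ r, ρ r = π r) :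
    (X →ₗ[R] R) ≃ₗ[Sᵐᵒᵖ] (X →ₗ[S] S) :=
  LinearEquiv.ofBijective
    { toFun := fun φ ↦ π ∘ₗ φ.restrictScalars S
      map_add' := fun _ _ ↦ by ext; simp
      map_smul' := fun s φ ↦ by ext x; simp [← hρπ] }
    hπ.bijective_comp

theorem IsCoinduced.isCoinduced_op_iff_isReflexiveMod (hπ : IsCoinduced R π)
    (hρπ : ∀ r, ρ r = π r) : IsCoinduced Rᵐᵒᵖ ρ ↔ IsReflexiveMod S R := by
  let e : Rᵐᵒᵖ ≃ₗ[Sᵐᵒᵖ] (R →ₗ[S] S) := (opLinearEquiv Sᵐᵒᵖ).symm ≪≫ₗ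
    (LinearMap.ringLmapEquivSelf R Sᵐᵒᵖ R).symm ≪≫ₗ hπ.dualEquiv R hρπ
  have he : (fun b : R ↦ ρ ∘ₗ (LinearMap.toSpanSingleton Rᵐᵒᵖ R b).restrictScalars Sᵐᵒᵖ) =
      e.symm.arrowCongrAddEquiv (.refl Sᵐᵒᵖ S) ∘ evalFun S R := by
    ext b a
    change ρ (b * a.unop) = π (b * a.unop)
    exact hρπ _
  rw [IsCoinduced, he, EquivLike.comp_bijective, IsReflexiveMod]

theorem IsCoinduced.isReflexiveMod_iff (hπ : IsCoinduced R π) (hρ : IsCoinduced Rᵐᵒᵖ ρ)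
    (hρπ : ∀ r, ρ r = π r) : IsReflexiveMod R X ↔ IsReflexiveMod S X := by
  let D := hπ.dualEquiv X hρπ
  have square :
      (fun G : (X →ₗ[R] R) →ₗ[Rᵐᵒᵖ] R ↦ ρ ∘ₗ G.restrictScalars Sᵐᵒᵖ) ∘ evalFun R X =
        D.symm.arrowCongrAddEquiv (.refl Sᵐᵒᵖ S) ∘ evalFun S X := by
    ext x φ
    change ρ (φ x) = π (φ x)
    exact hρπ (φ x)
  rw [IsReflexiveMod, IsReflexiveMod, ← Function.Bijective.of_comp_iff' hρ.bijective_comp, square,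
    EquivLike.comp_bijective]

end TwoSided

theorem IsReflexiveExtension.exists_isCoinduced {S R : Type*} [Ring S] [Ring R]
    [Module S R] [IsScalarTower S R R] {θ : S →+* R} (hθ : IsReflexiveExtension θ) :
    ∃ π : R →ₗ[S] S, IsCoinduced R π ∧ ∀ r s, π (r * θ s) = π r * s := by
  obtain ⟨-, Φ, hΦ, -, hΦ_left, hΦ_right⟩ := hθ
  obtain ⟨π, hΦπ⟩ := hΦ.surjective 1
  let coind : R → R →ₗ[S] S :=
    fun a ↦ π ∘ₗ (LinearMap.toSpanSingleton R R a).restrictScalars S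
  have hΦ_coind (a : R) : Φ (coind a) = a := by
    rw [hΦ_left a π (coind a) fun _ ↦ rfl, hΦπ, mul_one]
  have hcoind : Function.Bijective coind := by
    rw [← Function.Bijective.of_comp_iff' hΦ, show Φ ∘ coind = id from funext hΦ_coind]
    exact Function.bijective_id
  refine ⟨π, hcoind, fun r s ↦ ?_⟩
  have coind_θ : coind (θ s) = op s • π := hΦ.injective <| by
    rw [hΦ_coind, hΦ_right s π (op s • π) fun _ ↦ rfl, hΦπ, one_mul]
  exact LinearMap.congr_fun coind_θ r

theorem reflexive_extension_preserves_reflexivity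
    {S : Type u} {R : Type v} [Ring S] [Ring R] (θ : S →+* R)
    [Module S R] (hR : ∀ (s : S) (r : R), s • r = θ s * r)
    (hθ : IsReflexiveExtension θ)
    (X : Type w) [AddCommGroup X] [Module R X]
    [Module S X] (hX : ∀ (s : S) (x : X), s • x = θ s • x) :
    IsReflexiveMod R X ↔ IsReflexiveMod S X := by
  have : IsScalarTower S R R := isScalarTower_of_smul_eq θ hR hR
  have : IsScalarTower S R X := isScalarTower_of_smul_eq θ hR hX
  let _ : Module Sᵐᵒᵖ R := Module.compHom R θ.op
  have : SMulCommClass R Sᵐᵒᵖ R := ⟨fun a s r ↦ (mul_assoc a r (θ s.unop)).symm⟩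
  have : IsScalarTower Sᵐᵒᵖ Rᵐᵒᵖ R :=
    isScalarTower_of_smul_eq θ.op (fun _ _ ↦ rfl) fun _ _ ↦ rfl
  obtain ⟨π, hπ, hπ_right⟩ := hθ.exists_isCoinduced
  let ρ : R →ₗ[Sᵐᵒᵖ] S := { π with map_smul' := fun s r ↦ hπ_right r s.unop }
  have hρ : IsCoinduced Rᵐᵒᵖ ρ := (hπ.isCoinduced_op_iff_isReflexiveMod fun _ ↦ rfl).2 hθ.1
  exact hπ.isReflexiveMod_iff X hρ fun _ ↦ rfl
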